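/- arXiv:2107.07910 — 8 statements merged into one kernel-verified Lean document; each statement's English description precedes it below -/
import Mathlib

section
/- For every ideal policy t ∈ T and every opponent platform x ∈ T, candidate l's best responses are sandwiched between x and t: if x < t then φ^l_t(x) ⊆ (x, t]; if x = t then φ^l_t(x) = {t}; and if x > t then φ^l_t(x) ⊆ [t, x). -/
/-!
The payoff gain over conceding the opponent's platform is
`U t y x - u x t = P y x * (u y t - u x t)`, and the winning probability `P` is strictly positive on
`T` because `F` is strictly increasing with values in `[0,1]`, hence lies in `(0,1)` at the
midpoint of two distinct platforms (`P_pos`).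

If `x = t`, every `y ≠ t` therefore has a negative gain, while `t` itself has gain zero. If `x ≠ t`,
the platform `t` has a positive gain. A best response `y` thus has `u y t > u x t`, and this rules
out `y = x` and, by strict concavity, any `y` on the other side of `x` from `t`. A platform `y`
beyond `t` has both a smaller winning probability than `t` (its midpoint with `x` is less
favourable) and a smaller utility, so it is strictly dominated by `t`.
-/

open Set

/-- The policy space `T = [0,1] ⊆ ℝ`. -/
def T : Set ℝ := Set.Icc 0 1

/-- Hypotheses on the beliefs `F` about the median voter's ideal policy:
continuous, strictly increasing on `T`, with values in `[0,1]` (full support). -/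
def Fhyp (F : ℝ → ℝ) : Prop :=
  ContinuousOn F T ∧ StrictMonoOn F T ∧ ∀ x ∈ T, 0 ≤ F x ∧ F x ≤ 1

/-- The probability that candidate `l` wins given platforms `xl, xr`. -/
noncomputable def P (F : ℝ → ℝ) (xl xr : ℝ) : ℝ :=
  if xl < xr then F ((xl + xr) / 2)
  else if xl = xr then 1 / 2
  else 1 - F ((xl + xr) / 2)

/-- Hypotheses on the payoff `u x t`: jointly continuous on `T × T`, strictly
concave in the platform, and uniquely maximized at the ideal policy. -/
def uhyp (u : ℝ → ℝ → ℝ) : Prop :=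
  ContinuousOn (fun p : ℝ × ℝ => u p.1 p.2) (T ×ˢ T) ∧
  (∀ t ∈ T, StrictConcaveOn ℝ T (fun x => u x t)) ∧
  (∀ t ∈ T, ∀ x ∈ T, x ≠ t → u x t < u t t)

/-- Expected payoff of a candidate with ideal policy `t` given platforms `xl, xr`. -/
noncomputable def U (F : ℝ → ℝ) (u : ℝ → ℝ → ℝ) (t xl xr : ℝ) : ℝ :=
  P F xl xr * u xl t + (1 - P F xl xr) * u xr t

/-- Best-response set of candidate `l` with ideal policy `t` to opponent platform `x`. -/
def brL (F : ℝ → ℝ) (u : ℝ → ℝ → ℝ) (t x : ℝ) : Set ℝ :=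
  {y ∈ T | ∀ z ∈ T, U F u t z x ≤ U F u t y x}

/-- Best-response set of candidate `r` with ideal policy `t` to opponent platform `x`. -/
def brR (F : ℝ → ℝ) (u : ℝ → ℝ → ℝ) (t x : ℝ) : Set ℝ :=
  {y ∈ T | ∀ z ∈ T, U F u t x z ≤ U F u t x y}

/-- The set of Nash equilibria given ideal policies `tl, tr`
(ordered coordinatewise via the product order on `ℝ × ℝ`). -/
def E (F : ℝ → ℝ) (u : ℝ → ℝ → ℝ) (tl tr : ℝ) : Set (ℝ × ℝ) :=
  {p | p.1 ∈ brL F u tl p.2 ∧ p.2 ∈ brR F u tr p.1}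

/-- Strict single crossing property (SSCP). -/
def SSCP (F : ℝ → ℝ) (u : ℝ → ℝ → ℝ) : Prop :=
  ∀ t x x' y y' t' : ℝ, t ∈ T → x ∈ T → x' ∈ T → y ∈ T → y' ∈ T → t' ∈ T →
    t ≤ x → x < x' → x' < y → y < y' → y' ≤ t' →
    (U F u t x' y ≥ U F u t x y → U F u t x' y' > U F u t x y') ∧
    (U F u t' x' y ≥ U F u t' x' y' → U F u t' x y > U F u t' x y')

/-- Strict log supermodularity (SLS). -/
def SLS (u : ℝ → ℝ → ℝ) : Prop :=
  ∀ t t' x x' y : ℝ, t ∈ T → t' ∈ T → x ∈ T → x' ∈ T → y ∈ T →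
    ((t < t' ∧ t' ≤ x ∧ x < x' ∧ x' < y) ∨ (y < x ∧ x < x' ∧ x' ≤ t ∧ t < t')) →
    (u x' t' - u y t') / (u x t' - u y t') > (u x' t - u y t) / (u x t - u y t)

/-- The expected policy function. -/
noncomputable def pol (F : ℝ → ℝ) (xl xr : ℝ) : ℝ :=
  P F xl xr * xl + (1 - P F xl xr) * xr

/-- Strict positivity holds also when `F 0 = 0` or `F 1 = 1`: for distinct platforms the midpoint is
interior to `T`. -/
lemma P_pos {F : ℝ → ℝ} (hF : Fhyp F) {y x : ℝ} (hy : y ∈ T) (hx : x ∈ T) : 0 < P F y x := by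
  obtain ⟨-, hm, hb⟩ := hF
  have hmid : (y + x) / 2 ∈ T := by
    constructor <;> linarith [hy.1, hy.2, hx.1, hx.2]
  have h0 : (0 : ℝ) ∈ T := ⟨le_rfl, zero_le_one⟩
  have h1 : (1 : ℝ) ∈ T := ⟨zero_le_one, le_rfl⟩
  unfold P
  split_ifs with h h'
  · have := hm h0 hmid (by linarith [hy.1])
    linarith [(hb 0 h0).1]
  · norm_num
  · have hlt : x < y := lt_of_le_of_ne (not_lt.mp h) (Ne.symm h')
    have := hm hmid h1 (by linarith [hy.2])
    linarith [(hb 1 h1).2]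

lemma P_lt_of_right {F : ℝ → ℝ} (hF : Fhyp F) {x t y : ℝ} (hx : x ∈ T) (ht : t ∈ T) (hy : y ∈ T)
    (hxt : x < t) (hty : t < y) : P F y x < P F t x := by
  have : F ((t + x) / 2) < F ((y + x) / 2) := hF.2.1
    (by constructor <;> linarith [hx.1, hx.2, ht.1, ht.2])
    (by constructor <;> linarith [hx.1, hx.2, hy.1, hy.2]) (by linarith)
  unfold P
  rw [if_neg (by linarith), if_neg (by linarith), if_neg (by linarith), if_neg (by linarith)]
  linarith

lemma P_lt_of_left {F : ℝ → ℝ} (hF : Fhyp F) {x t y : ℝ} (hx : x ∈ T) (ht : t ∈ T) (hy : y ∈ T)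
    (hxt : t < x) (hty : y < t) : P F y x < P F t x := by
  have : F ((y + x) / 2) < F ((t + x) / 2) := hF.2.1
    (by constructor <;> linarith [hx.1, hx.2, hy.1, hy.2])
    (by constructor <;> linarith [hx.1, hx.2, ht.1, ht.2]) (by linarith)
  unfold P
  rw [if_pos (by linarith), if_pos (by linarith)]
  linarith

/-- Single-peakedness: a strictly concave utility decreases when moving away from its peak `t`. -/
lemma u_lt_of_mem_openSegment {u : ℝ → ℝ → ℝ} (hu : uhyp u) {t x y : ℝ} (ht : t ∈ T) (hy : y ∈ T)
    (hyt : y ≠ t) (hx : x ∈ openSegment ℝ y t) : u y t < u x t := by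
  have h := (hu.2.1 t ht).lt_on_openSegment hy ht hyt hx
  rwa [min_eq_left (hu.2.2 t ht y hy hyt).le] at h

lemma U_eq (F : ℝ → ℝ) (u : ℝ → ℝ → ℝ) (t y x : ℝ) :
    U F u t y x = u x t + P F y x * (u y t - u x t) := by
  unfold U; ring

/-- Against `x ≠ t`, a best response gives strictly higher utility than the opponent's platform,
since proposing `t` already does so with positive probability. -/
lemma u_lt_of_mem_brL {F : ℝ → ℝ} {u : ℝ → ℝ → ℝ} (hF : Fhyp F) (hu : uhyp u) {t x y : ℝ}
    (ht : t ∈ T) (hx : x ∈ T) (hxt : x ≠ t) (hy : y ∈ brL F u t x) : u x t < u y t := by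
  have h := hy.2 t ht
  rw [U_eq, U_eq] at h
  have h1 := mul_pos (P_pos hF ht hx) (sub_pos.mpr (hu.2.2 t ht x hx hxt))
  have h2 : 0 < P F y x * (u y t - u x t) := by linarith
  have h3 := (mul_pos_iff_of_pos_left (P_pos hF hy.1 hx)).mp h2
  linarith

/-- A best response cannot win with lower probability than `t` does, since `t` gives the highest
utility. -/
lemma P_le_of_mem_brL {F : ℝ → ℝ} {u : ℝ → ℝ → ℝ} (hF : Fhyp F) (hu : uhyp u) {t x y : ℝ}
    (ht : t ∈ T) (hx : x ∈ T) (hxt : x ≠ t) (hy : y ∈ brL F u t x) : P F t x ≤ P F y x := by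
  by_contra! hP
  have h := hy.2 t ht
  rw [U_eq, U_eq] at h
  have hd := hu.2.2 t ht x hx hxt
  have hle : u y t ≤ u t t := by
    by_cases hyt : y = t
    · rw [hyt]
    · exact (hu.2.2 t ht y hy.1 hyt).le
  have h1 : P F y x * (u y t - u x t) ≤ P F y x * (u t t - u x t) :=
    mul_le_mul_of_nonneg_left (by linarith) (P_pos hF hy.1 hx).le
  have h2 := mul_lt_mul_of_pos_right hP (sub_pos.mpr hd)
  linarith

/-- Candidate `l`'s best responses are sandwiched between the opponent's
platform `x` and the ideal policy `t`. -/
theorem brL_sandwich (F : ℝ → ℝ) (u : ℝ → ℝ → ℝ) (hF : Fhyp F) (hu : uhyp u) :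
    ∀ t ∈ T, ∀ x ∈ T,
      (x < t → brL F u t x ⊆ Set.Ioc x t) ∧
      (x = t → brL F u t x = {t}) ∧
      (x > t → brL F u t x ⊆ Set.Ico t x) := by
  intro t ht x hx
  refine ⟨fun hxt y hy => ?_, ?_, fun hxt y hy => ?_⟩
  · have hux := u_lt_of_mem_brL hF hu ht hx hxt.ne hy
    have hP := P_le_of_mem_brL hF hu ht hx hxt.ne hy
    constructor
    · by_contra! hyx
      rcases hyx.eq_or_lt with rfl | hlt
      · exact lt_irrefl _ hux
      · refine lt_asymm hux (u_lt_of_mem_openSegment hu ht hy.1 (hlt.trans hxt).ne ?_)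
        rw [openSegment_eq_Ioo (hlt.trans hxt)]
        exact ⟨hlt, hxt⟩
    · by_contra! hty
      exact (P_lt_of_right hF hx ht hy.1 hxt hty).not_ge hP
  · rintro rfl
    -- Against `x = t` the gain of any other platform is negative.
    have key : ∀ y ∈ T, y ≠ x → U F u x y x < U F u x x x := by
      intro y hy hyx
      rw [U_eq, U_eq]
      have := mul_pos (P_pos hF hy hx) (sub_pos.mpr (hu.2.2 x hx y hy hyx))
      linarith
    ext y
    rw [Set.mem_singleton_iff]
    constructor
    · intro hy
      by_contra hyx
      exact (key y hy.1 hyx).not_ge (hy.2 x hx)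
    · rintro rfl
      refine ⟨hx, fun z hz => ?_⟩
      by_cases hzy : z = y
      · rw [hzy]
      · exact (key z hz hzy).le
  · have hux := u_lt_of_mem_brL hF hu ht hx hxt.ne' hy
    have hP := P_le_of_mem_brL hF hu ht hx hxt.ne' hy
    constructor
    · by_contra! hty
      exact (P_lt_of_left hF hx ht hy.1 hxt hty).not_ge hP
    · by_contra! hxy
      rcases hxy.eq_or_lt with rfl | hlt
      · exact lt_irrefl _ hux
      · refine lt_asymm hux (u_lt_of_mem_openSegment hu ht hy.1 (lt_trans hxt hlt).ne' ?_)
        rw [openSegment_symm, openSegment_eq_Ioo (lt_trans hxt hlt)]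
        exact ⟨hxt, hlt⟩
end

section
/- For every ideal policy t ∈ T and every opponent platform x ∈ T, candidate r's best responses are sandwiched between x and t: if x < t then φ^r_t(x) ⊆ (x, t]; if x = t then φ^r_t(x) = {t}; and if x > t then φ^r_t(x) ⊆ [t, x). -/
/-!
Write `w(y) = 1 - P(x, y)` for the probability that candidate `r` wins with platform `y`. Then
`U_t(x, y) - u(x, t) = w(y) * (u(y, t) - u(x, t))` (`U_eq_gain`), and `0 < w(y)` whenever `y ≠ x`
(`one_sub_P_pos`), because the midpoint of two distinct platforms is interior and `F` is strictly
increasing.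

If `x ≠ t`, then the platform `t` earns a positive gain, so a best response `y` must satisfy
`u(x, t) < u(y, t)`. By concavity, `y` is then on the same side of `x` as `t`. It cannot lie
strictly beyond `t`: moving back to `t` would raise both the winning probability, since the
midpoint moves towards `x`, and the payoff from winning. If `x = t`, every platform other than
`t` earns a negative gain.
-/

open Set

theorem U_eq_gain (F : ℝ → ℝ) (u : ℝ → ℝ → ℝ) (t x y : ℝ) :
    U F u t x y = u x t + (1 - P F x y) * (u y t - u x t) := by
  unfold U; ring

/-- A platform distinct from the opponent's wins with positive probability. -/
theorem one_sub_P_pos {F : ℝ → ℝ} (hF : Fhyp F) {x y : ℝ} (hx : x ∈ T) (hy : y ∈ T)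
    (hne : x ≠ y) : 0 < 1 - P F x y := by
  obtain ⟨-, hmono, hbd⟩ := hF
  have h0 : (0 : ℝ) ∈ T := ⟨le_rfl, zero_le_one⟩
  have h1 : (1 : ℝ) ∈ T := ⟨zero_le_one, le_rfl⟩
  obtain ⟨hx0, hx1⟩ := hx
  obtain ⟨hy0, hy1⟩ := hy
  have hm : (x + y) / 2 ∈ T := ⟨by linarith, by linarith⟩
  rcases lt_or_gt_of_ne hne with h | h
  · have := hmono hm h1 (by linarith)
    have := (hbd 1 h1).2
    rw [P, if_pos h]
    linarith
  · have := hmono h0 hm (by linarith)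
    have := (hbd 0 h0).1
    rw [P, if_neg h.not_gt, if_neg h.ne']
    linarith

/-- A best response to `x ≠ t` strictly improves on the opponent's platform, since `t` does. -/
theorem u_lt_of_mem_brR {F : ℝ → ℝ} {u : ℝ → ℝ → ℝ} (hF : Fhyp F) (hu : uhyp u) {t x y : ℝ}
    (ht : t ∈ T) (hx : x ∈ T) (hne : x ≠ t) (hy : y ∈ brR F u t x) : u x t < u y t := by
  have h := hy.2 t ht
  rw [U_eq_gain, U_eq_gain] at h
  have hgain := mul_pos (one_sub_P_pos hF hx ht hne) (sub_pos.2 (hu.2.2 t ht x hx hne))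
  by_contra! hle
  have hxy : 0 ≤ 1 - P F x y := by
    by_cases hxy : x = y
    · subst hxy; norm_num [P]
    · exact (one_sub_P_pos hF hx hy.1 hxy).le
  nlinarith [mul_nonneg hxy (sub_nonneg.2 hle)]

/-- A best response `y ≠ t` wins with strictly higher probability than `t` itself. -/
theorem P_lt_of_mem_brR {F : ℝ → ℝ} {u : ℝ → ℝ → ℝ} (hF : Fhyp F) (hu : uhyp u) {t x y : ℝ}
    (ht : t ∈ T) (hx : x ∈ T) (hne : x ≠ t) (hy : y ∈ brR F u t x) (hyt : y ≠ t) :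
    P F x y < P F x t := by
  have h := hy.2 t ht
  rw [U_eq_gain, U_eq_gain] at h
  have hxy := u_lt_of_mem_brR hF hu ht hx hne hy
  have hlt := hu.2.2 t ht y hy.1 hyt
  have hw := one_sub_P_pos hF hx ht hne
  by_contra! hle
  have h1 := mul_nonneg (sub_nonneg.2 hle) (sub_pos.2 hxy).le
  have h2 := mul_pos hw (sub_pos.2 hlt)
  nlinarith

/-- The payoff does not increase when moving from `x` to `y`, away from the ideal policy `t`. -/
theorem u_le_of_between {u : ℝ → ℝ → ℝ} (hu : uhyp u) {t x y : ℝ} (ht : t ∈ T) (hy : y ∈ T)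
    (hx : x ∈ segment ℝ y t) : u y t ≤ u x t := by
  have hmin := (hu.2.1 t ht).concaveOn.min_le_of_mem_segment hy ht hx
  have hle : u y t ≤ u t t := by
    by_cases h : y = t
    · rw [h]
    · exact (hu.2.2 t ht y hy h).le
  rwa [min_eq_left hle] at hmin

/-- Candidate `r`'s best responses are sandwiched between the opponent's
platform `x` and the ideal policy `t`. -/
theorem brR_sandwich (F : ℝ → ℝ) (u : ℝ → ℝ → ℝ) (hF : Fhyp F) (hu : uhyp u) :
    ∀ t ∈ T, ∀ x ∈ T,
      (x < t → brR F u t x ⊆ Set.Ioc x t) ∧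
      (x = t → brR F u t x = {t}) ∧
      (x > t → brR F u t x ⊆ Set.Ico t x) := by
  intro t ht x hx
  have mid : ∀ {z : ℝ}, z ∈ T → (x + z) / 2 ∈ T := fun hz =>
    ⟨by linarith [hx.1, hz.1], by linarith [hx.2, hz.2]⟩
  refine ⟨fun hxt y hy => ?_, ?_, fun hxt y hy => ?_⟩
  · have hxy := u_lt_of_mem_brR hF hu ht hx hxt.ne hy
    have h1 : x < y := by
      by_contra! h
      exact hxy.not_ge (u_le_of_between hu ht hy.1 (Icc_subset_segment ⟨h, hxt.le⟩))
    refine ⟨h1, ?_⟩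
    by_contra! h
    have hP := P_lt_of_mem_brR hF hu ht hx hxt.ne hy h.ne'
    rw [P, P, if_pos h1, if_pos hxt] at hP
    linarith [hF.2.1 (mid ht) (mid hy.1) (by linarith)]
  · rintro rfl
    ext y
    rw [mem_singleton_iff]
    constructor
    · intro hy
      by_contra hne
      have h := hy.2 x hx
      rw [U_eq_gain, U_eq_gain] at h
      nlinarith [mul_pos (one_sub_P_pos hF hx hy.1 (Ne.symm hne))
        (sub_pos.2 (hu.2.2 x hx y hy.1 hne))]
    · rintro rfl
      refine ⟨hx, fun z hz => ?_⟩
      by_cases hne : z = y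
      · rw [hne]
      rw [U_eq_gain, U_eq_gain]
      nlinarith [mul_pos (one_sub_P_pos hF hx hz (Ne.symm hne))
        (sub_pos.2 (hu.2.2 y hx z hz hne))]
  · have hxy := u_lt_of_mem_brR hF hu ht hx hxt.ne' hy
    have h1 : y < x := by
      by_contra! h
      refine hxy.not_ge (u_le_of_between hu ht hy.1 ?_)
      rw [segment_symm]
      exact Icc_subset_segment ⟨hxt.le, h⟩
    refine ⟨?_, h1⟩
    by_contra! h
    have hP := P_lt_of_mem_brR hF hu ht hx hxt.ne' hy h.ne
    rw [P, P, if_neg h1.not_gt, if_neg h1.ne', if_neg hxt.not_gt, if_neg hxt.ne'] at hP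
    linarith [hF.2.1 (mid hy.1) (mid ht) (by linarith)]
end

section
/- Assume SSCP. Let t_l, t_r, x_l, x'_l ∈ T with t_l ≤ x_l < x'_l ≤ t_r. Then for every x_r ∈ φ^r_{t_r}(x_l) and every x'_r ∈ φ^r_{t_r}(x'_l), one has x'_r ≥ x_r; that is, every selection of candidate r's best-response correspondence is non-decreasing in the opponent's platform over [t_l, t_r]. -/
/-!
A best response of candidate `r` to a platform `a < t` lies in `(a, t]`: playing `t` beats the sure
payoff `u a t`, whereas a platform `y < a` is worse than `a` for `t` by concavity, and a platform
beyond `t` both wins less often and yields less than `t`. The unique best response to `t` itself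
is `t`, since full support makes every other platform win with positive probability.

Hence if `xl' = tr` then `xr' = tr ≥ xr`. Otherwise, if `xr' < xr` then
`tl ≤ xl < xl' < xr' < xr ≤ tr`, so part (ii) of SSCP applies: the optimality of `xr'` against
`xl'` makes `xr'` strictly better than `xr` against `xl`, a contradiction.
-/

open Set

/-- A best response to a platform `a` strictly left of the ideal policy `t` lies in `(a, t]`. -/
lemma brR_mem_Ioc {F : ℝ → ℝ} {u : ℝ → ℝ → ℝ} (hF : Fhyp F) (hu : uhyp u)
    {t a y : ℝ} (ht : t ∈ T) (ha : a ∈ T) (hat : a < t) (hy : y ∈ brR F u t a) :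
    a < y ∧ y ≤ t := by
  obtain ⟨-, hmono, hF01⟩ := hF
  obtain ⟨-, hconc, hmax⟩ := hu
  obtain ⟨hyT, hbest⟩ := hy
  have hua : u a t < u t t := hmax t ht a ha hat.ne
  have hbt := hbest t ht
  simp only [T, mem_Icc] at ht ha hyT
  have hmT : (a + t) / 2 ∈ T := ⟨by linarith, by linarith⟩
  have h1T : (1 : ℝ) ∈ T := ⟨by norm_num, le_rfl⟩
  -- Full support: `r` wins with positive probability at `t`.
  have hwin : F ((a + t) / 2) < 1 :=
    (hmono hmT h1T (by linarith)).trans_le (hF01 1 h1T).2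
  have hUt : U F u t a t = u a t + (1 - F ((a + t) / 2)) * (u t t - u a t) := by
    simp only [U, P, if_pos hat]; ring
  have hpos : 0 < (1 - F ((a + t) / 2)) * (u t t - u a t) :=
    mul_pos (by linarith) (by linarith)
  have hmid : (a + y) / 2 ∈ T := ⟨by linarith, by linarith⟩
  have hay : a < y := by
    by_contra! hle
    rcases hle.lt_or_eq with hlt | rfl
    · have huy : u y t ≤ u a t := by
        have := (hconc t ht).concaveOn.min_le_of_mem_Icc (x := y) (y := t) (z := a)
          hyT ht ⟨hle, hat.le⟩
        rcases min_le_iff.1 this with h | h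
        · exact h
        · exact absurd hua (not_lt.2 h)
      have hUy : U F u t a y = u a t + F ((a + y) / 2) * (u y t - u a t) := by
        simp only [U, P, if_neg hle.not_gt, if_neg hlt.ne']; ring
      have := mul_nonneg (hF01 _ hmid).1 (sub_nonneg.2 huy)
      linarith
    · have hUy : U F u t y y = u y t := by simp only [U]; ring
      linarith
  refine ⟨hay, ?_⟩
  by_contra! hty
  have hUy : U F u t a y = u a t + (1 - F ((a + y) / 2)) * (u y t - u a t) := by
    simp only [U, P, if_pos hay]; ring
  have huy : u y t < u t t := hmax t ht y hyT hty.ne'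
  have hFlt : F ((a + t) / 2) < F ((a + y) / 2) := hmono hmT hmid (by linarith)
  have e1 : (1 - F ((a + y) / 2)) * (u y t - u a t) ≤ (1 - F ((a + y) / 2)) * (u t t - u a t) :=
    mul_le_mul_of_nonneg_left (by linarith) (by linarith [(hF01 _ hmid).2])
  have e2 : (1 - F ((a + y) / 2)) * (u t t - u a t) < (1 - F ((a + t) / 2)) * (u t t - u a t) :=
    mul_lt_mul_of_pos_right (by linarith) (by linarith)
  linarith

lemma brR_self {F : ℝ → ℝ} {u : ℝ → ℝ → ℝ} (hF : Fhyp F) (hu : uhyp u)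
    {t y : ℝ} (ht : t ∈ T) (hy : y ∈ brR F u t t) : y = t := by
  obtain ⟨-, hmono, hF01⟩ := hF
  obtain ⟨-, -, hmax⟩ := hu
  obtain ⟨hyT, hbest⟩ := hy
  by_contra hne
  have huy : u y t < u t t := hmax t ht y hyT hne
  have hbt := hbest t ht
  have hUt : U F u t t t = u t t := by simp only [U]; ring
  simp only [T, mem_Icc] at ht hyT
  have hmid : (t + y) / 2 ∈ T := ⟨by linarith, by linarith⟩
  have h0T : (0 : ℝ) ∈ T := ⟨le_rfl, by norm_num⟩
  have h1T : (1 : ℝ) ∈ T := ⟨by norm_num, le_rfl⟩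
  rcases lt_or_gt_of_ne hne with h | h
  · have hUy : U F u t t y = u t t - F ((t + y) / 2) * (u t t - u y t) := by
      simp only [U, P, if_neg h.not_gt, if_neg h.ne']; ring
    have hp : 0 < F ((t + y) / 2) :=
      (hF01 0 h0T).1.trans_lt (hmono h0T hmid (by linarith))
    have := mul_pos hp (sub_pos.2 huy)
    linarith
  · have hUy : U F u t t y = u t t - (1 - F ((t + y) / 2)) * (u t t - u y t) := by
      simp only [U, P, if_pos h]; ring
    have hp : F ((t + y) / 2) < 1 :=
      (hmono hmid h1T (by linarith)).trans_le (hF01 1 h1T).2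
    have := mul_pos (sub_pos.2 hp) (sub_pos.2 huy)
    linarith

/-- Under SSCP, every selection of candidate `r`'s best-response correspondence
is non-decreasing in the opponent's platform over `[t_l, t_r]`. -/
theorem brR_monotone_in_opponent (F : ℝ → ℝ) (u : ℝ → ℝ → ℝ)
    (hF : Fhyp F) (hu : uhyp u) (hSSCP : SSCP F u)
    (tl tr xl xl' : ℝ) (htl : tl ∈ T) (htr : tr ∈ T) (hxl : xl ∈ T) (hxl' : xl' ∈ T)
    (h1 : tl ≤ xl) (h2 : xl < xl') (h3 : xl' ≤ tr) :
    ∀ xr ∈ brR F u tr xl, ∀ xr' ∈ brR F u tr xl', xr ≤ xr' := by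
  intro xr hxr xr' hxr'
  obtain ⟨-, hle⟩ := brR_mem_Ioc hF hu htr hxl (h2.trans_le h3) hxr
  rcases h3.lt_or_eq with hlt | rfl
  · obtain ⟨hgt, -⟩ := brR_mem_Ioc hF hu htr hxl' hlt hxr'
    by_contra! hcon
    exact absurd
      ((hSSCP tl xl xl' xr' xr tr htl hxl hxl' hxr'.1 hxr.1 htr h1 h2 hgt hcon hle).2
        (hxr'.2 xr hxr.1))
      (not_lt.2 (hxr.2 xr' hxr'.1))
  · rw [brR_self hF hu htr hxr']
    exact hle
end

section
/- Assume SLS. Let t_l, t'_l, x_l, x'_l, x_r ∈ T with t_l < t'_l ≤ x_l < x'_l < x_r. If U_{t_l}(x'_l, x_r) ≥ U_{t_l}(x_l, x_r), then U_{t'_l}(x'_l, x_r) > U_{t'_l}(x_l, x_r). -/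
/-! Write `p = F ((xl + xr) / 2)`, `p' = F ((xl' + xr) / 2)` for the winning probabilities and
`A t x = u x t - u xr t` for the gain of platform `x` over the opponent's `xr`. For `x < xr`,
`U F u t x xr = P F x xr * A t x + u xr t`, so moderating from `xl` to `xl'` weakly pays for `t`
exactly when `p * A t xl ≤ p' * A t xl'`. Single-peakedness (`u_lt_of_ideal_le`) makes `A t xl`
positive, so this reads `p ≤ p' * (A t xl' / A t xl)`. Since `p' > p ≥ 0`, SLS makes the
right-hand side strictly larger at `tl'` than at `tl`. -/

open Set

/-- Strict concavity turns unique maximality at `t` into single-peakedness: utility strictly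
decreases to the right of the ideal policy. -/
lemma u_lt_of_ideal_le {u : ℝ → ℝ → ℝ} (hu : uhyp u) {t x y : ℝ}
    (ht : t ∈ T) (hy : y ∈ T) (htx : t ≤ x) (hxy : x < y) : u y t < u x t := by
  have hyt : u y t < u t t := hu.2.2 t ht y hy (htx.trans_lt hxy).ne'
  rcases htx.eq_or_lt with rfl | htx
  · exact hyt
  · have hx : x ∈ openSegment ℝ t y := by
      rw [openSegment_eq_Ioo (htx.trans hxy)]
      exact ⟨htx, hxy⟩
    have := (hu.2.1 t ht).lt_on_openSegment ht hy (htx.trans hxy).ne hx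
    rwa [min_eq_right hyt.le] at this

/-- Under SLS, the expected payoff satisfies a single-crossing condition in
`(x_l, t_l)`: if moderating from `x_l` to `x'_l` weakly pays for `t_l`, it
strictly pays for `t'_l > t_l`. -/
theorem sls_single_crossing_left (F : ℝ → ℝ) (u : ℝ → ℝ → ℝ)
    (hF : Fhyp F) (hu : uhyp u) (hSLS : SLS u)
    (tl tl' xl xl' xr : ℝ)
    (htl : tl ∈ T) (htl' : tl' ∈ T) (hxl : xl ∈ T) (hxl' : xl' ∈ T) (hxr : xr ∈ T)
    (h1 : tl < tl') (h2 : tl' ≤ xl) (h3 : xl < xl') (h4 : xl' < xr)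
    (h : U F u tl xl' xr ≥ U F u tl xl xr) :
    U F u tl' xl' xr > U F u tl' xl xr := by
  have hmid : (xl + xr) / 2 ∈ T := by
    constructor <;> linarith [hxl.1, hxl.2, hxr.1, hxr.2]
  have hmid' : (xl' + xr) / 2 ∈ T := by
    constructor <;> linarith [hxl'.1, hxl'.2, hxr.1, hxr.2]
  have hp : 0 ≤ F ((xl + xr) / 2) := (hF.2.2 _ hmid).1
  have hpp : F ((xl + xr) / 2) < F ((xl' + xr) / 2) := hF.2.1 hmid hmid' (by linarith)
  have hA : 0 < u xl tl - u xr tl :=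
    sub_pos.2 (u_lt_of_ideal_le hu htl hxr (h1.le.trans h2) (h3.trans h4))
  have hB : 0 < u xl tl' - u xr tl' :=
    sub_pos.2 (u_lt_of_ideal_le hu htl' hxr h2 (h3.trans h4))
  have hs := hSLS tl tl' xl xl' xr htl htl' hxl hxl' hxr (Or.inl ⟨h1, h2, h3, h4⟩)
  simp only [U, P, if_pos h4, if_pos (h3.trans h4)] at h ⊢
  have hle : F ((xl + xr) / 2) ≤
      F ((xl' + xr) / 2) * ((u xl' tl - u xr tl) / (u xl tl - u xr tl)) := by
    rw [← mul_div_assoc, le_div_iff₀ hA]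
    linarith
  have hlt := hle.trans_lt (mul_lt_mul_of_pos_left hs (hp.trans_lt hpp))
  rw [← mul_div_assoc, lt_div_iff₀ hB] at hlt
  linarith
end

section
/- Assume SLS. Let t_r, t'_r, x_l, x_r, x'_r ∈ T with x_l < x_r < x'_r ≤ t_r < t'_r. If U_{t_r}(x_l, x'_r) ≥ U_{t_r}(x_l, x_r), then U_{t'_r}(x_l, x'_r) > U_{t'_r}(x_l, x_r). -/
/-!
Write `p = F ((xl + xr) / 2)`, `p' = F ((xl + xr') / 2)` and subtract the constant `u xl t` from the
expected payoff: `U F u t xl y - u xl t = (1 - P) * (u y t - u xl t)`. The hypothesis becomes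
`(1 - p') * a' ≥ (1 - p) * a` with `a, a'` the gains over `xl` at `tr`, and the goal becomes
`(1 - p') * b' > (1 - p) * b` with `b, b'` the gains at `tr'`. The gains `a, b` are positive since a
strictly concave function increases up to its peak (`lt_of_lt_of_lt_ideal`), and `1 - p' > 0` since
`F` is strictly increasing with values at most `1`. Strict log supermodularity gives `b' / b > a' / a`,
so `(1 - p') * b' > (1 - p') * (a' / a) * b ≥ (1 - p) * b`.
-/

open Set

/-- The payoff is strictly increasing in the platform to the left of the ideal policy. -/
lemma lt_of_lt_of_lt_ideal {u : ℝ → ℝ → ℝ} (hu : uhyp u) {t x y : ℝ}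
    (ht : t ∈ T) (hx : x ∈ T) (hxy : x < y) (hyt : y < t) : u x t < u y t := by
  have hxt : x < t := hxy.trans hyt
  have hy : y ∈ openSegment ℝ x t := by
    rw [openSegment_eq_Ioo hxt]
    exact ⟨hxy, hyt⟩
  have hmin := (hu.2.1 t ht).lt_on_openSegment hx ht hxt.ne hy
  rwa [min_eq_left (hu.2.2 t ht x hx hxt.ne).le] at hmin

/-- Under SLS, the expected payoff satisfies a single-crossing condition in
`(x_r, t_r)`: if moving from `x_r` to `x'_r` weakly pays for `t_r`, it strictly
pays for `t'_r > t_r`. -/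
theorem sls_single_crossing_right (F : ℝ → ℝ) (u : ℝ → ℝ → ℝ)
    (hF : Fhyp F) (hu : uhyp u) (hSLS : SLS u)
    (tr tr' xl xr xr' : ℝ)
    (htr : tr ∈ T) (htr' : tr' ∈ T) (hxl : xl ∈ T) (hxr : xr ∈ T) (hxr' : xr' ∈ T)
    (h1 : xl < xr) (h2 : xr < xr') (h3 : xr' ≤ tr) (h4 : tr < tr')
    (h : U F u tr xl xr' ≥ U F u tr xl xr) :
    U F u tr' xl xr' > U F u tr' xl xr := by
  have ha : 0 < u xr tr - u xl tr :=
    sub_pos.2 (lt_of_lt_of_lt_ideal hu htr hxl h1 (h2.trans_le h3))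
  have hb : 0 < u xr tr' - u xl tr' :=
    sub_pos.2 (lt_of_lt_of_lt_ideal hu htr' hxl h1 ((h2.trans_le h3).trans h4))
  have hp : 0 < 1 - F ((xl + xr') / 2) := by
    have hm : (xl + xr') / 2 ∈ T := ⟨by linarith [hxl.1, hxr'.1], by linarith [hxl.2, hxr'.2]⟩
    have h1T : (1 : ℝ) ∈ T := ⟨zero_le_one, le_rfl⟩
    have hlt := hF.2.1 hm h1T (by linarith [hxr'.2])
    linarith [(hF.2.2 1 h1T).2]
  have hcross := hSLS tr tr' xr xr' xl htr htr' hxr hxr' hxl (Or.inr ⟨h1, h2, h3, h4⟩)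
  rw [gt_iff_lt, div_lt_div_iff₀ ha hb] at hcross
  simp only [U, P, if_pos h1, if_pos (h1.trans h2)] at h ⊢
  have hgain : (1 - F ((xl + xr) / 2)) * (u xr tr - u xl tr)
      ≤ (1 - F ((xl + xr') / 2)) * (u xr' tr - u xl tr) := by linarith
  have hscaled := mul_le_mul_of_nonneg_right hgain hb.le
  have hstrict := mul_lt_mul_of_pos_left hcross hp
  have hgoal : (1 - F ((xl + xr) / 2)) * (u xr tr' - u xl tr')
      < (1 - F ((xl + xr') / 2)) * (u xr' tr' - u xl tr') :=
    lt_of_mul_lt_mul_right (by linarith) ha.le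
  linarith
end

section
/- Assume SLS. Let t_l < t'_l in T and fix x_r ∈ T with x_r > t_l. Then for every x_l ∈ φ^l_{t_l}(x_r) and every x'_l ∈ φ^l_{t'_l}(x_r), one has x'_l ≥ x_l; that is, candidate l's best responses are increasing in candidate l's ideal policy. -/
/-!
Relative to the status quo `xr`, a platform `z` gives an `l`-candidate of type `t` the gain
`P z xr * (u z t - u xr t)`, so best responses maximize this gain (`brL_gain`).

* If the type `t` lies below `xr`, every best response lies in `[t, xr)` (`brL_mem_Ico`): platform
  `t` has positive gain, platforms `≥ xr` have nonpositive gain, and platforms below `t` are beaten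
  by `t` both in winning probability and in utility.
* If `xr ≤ tl'`, any platform below `xr` has negative gain for `tl'`, whereas `xr` has gain zero;
  hence `xr ≤ xl'`, and `xl < xr` by the first point.
* If `tl' < xr` and `xl' < xl`, then `tl < tl' ≤ xl' < xl < xr`. Optimality of `xl` for `tl` bounds
  the ratio of winning probabilities by the utility ratio at `tl`, and SLS makes the utility ratio
  at `tl'` strictly larger, so `xl` strictly beats `xl'` for `tl'`, a contradiction.
-/

open Set

lemma uhyp.lt_of_lt_of_le {u : ℝ → ℝ → ℝ} (hu : uhyp u) {t a b : ℝ} (ht : t ∈ T) (ha : a ∈ T)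
    (hab : a < b) (hbt : b ≤ t) : u a t < u b t := by
  have hat : u a t < u t t := hu.2.2 t ht a ha (by linarith)
  rcases hbt.eq_or_lt with rfl | hbt
  · exact hat
  · have hb : b ∈ openSegment ℝ a t := by
      rw [openSegment_eq_Ioo (hab.trans hbt)]; exact ⟨hab, hbt⟩
    have h := (hu.2.1 t ht).lt_on_openSegment ha ht (hab.trans hbt).ne hb
    simpa [min_eq_left hat.le] using h

lemma uhyp.lt_of_le_of_lt {u : ℝ → ℝ → ℝ} (hu : uhyp u) {t a b : ℝ} (ht : t ∈ T) (hb : b ∈ T)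
    (hta : t ≤ a) (hab : a < b) : u b t < u a t := by
  have hbt : u b t < u t t := hu.2.2 t ht b hb (by linarith)
  rcases hta.eq_or_lt with rfl | hta
  · exact hbt
  · have ha : a ∈ openSegment ℝ t b := by
      rw [openSegment_eq_Ioo (hta.trans hab)]; exact ⟨hta, hab⟩
    have h := (hu.2.1 t ht).lt_on_openSegment ht hb (hta.trans hab).ne ha
    simpa [min_eq_right hbt.le] using h

lemma midpoint_mem_T {a b : ℝ} (ha : a ∈ T) (hb : b ∈ T) : (a + b) / 2 ∈ T := by
  obtain ⟨h1, h2⟩ := ha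
  obtain ⟨h3, h4⟩ := hb
  constructor <;> linarith

/-- Strict monotonicity of `F` lets its value vanish only at the midpoint `0`, which two distinct
platforms cannot have. -/
lemma Fhyp.midpoint_pos {F : ℝ → ℝ} (hF : Fhyp F) {a b : ℝ} (ha : a ∈ T) (hb : b ∈ T)
    (hab : a < b) : 0 < F ((a + b) / 2) := by
  have h0 : (0 : ℝ) ∈ T := ⟨le_rfl, zero_le_one⟩
  have h := hF.2.1 h0 (midpoint_mem_T ha hb) (by have := ha.1; linarith)
  exact (hF.2.2 0 h0).1.trans_lt h

lemma brL_gain {F : ℝ → ℝ} {u : ℝ → ℝ → ℝ} {t x y z : ℝ} (hy : y ∈ brL F u t x) (hz : z ∈ T) :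
    P F z x * (u z t - u x t) ≤ P F y x * (u y t - u x t) := by
  have h := hy.2 z hz
  unfold U at h
  linarith

lemma P_of_lt {F : ℝ → ℝ} {a b : ℝ} (h : a < b) : P F a b = F ((a + b) / 2) := if_pos h

/-- A candidate whose ideal policy is left of the opponent's platform locates weakly between the
two, and never on the opponent's platform. -/
lemma brL_mem_Ico {F : ℝ → ℝ} {u : ℝ → ℝ → ℝ} (hF : Fhyp F) (hu : uhyp u) {t x y : ℝ}
    (ht : t ∈ T) (hx : x ∈ T) (htx : t < x) (hy : y ∈ brL F u t x) : y ∈ Ico t x := by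
  have hyT : y ∈ T := hy.1
  have hg := brL_gain hy ht
  rw [P_of_lt htx] at hg
  have hpos := hF.midpoint_pos ht hx htx
  have hd : 0 < u t t - u x t := sub_pos.2 (hu.lt_of_le_of_lt ht hx le_rfl htx)
  have hprod := mul_pos hpos hd
  have hyx : y < x := by
    by_contra! hxy
    rcases hxy.eq_or_lt with rfl | hxy
    · simp only [sub_self, mul_zero] at hg
      linarith
    · have hP : 0 ≤ P F y x := by
        rw [P, if_neg hxy.not_gt, if_neg hxy.ne']
        linarith [(hF.2.2 _ (midpoint_mem_T hyT hx)).2]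
      have hneg : u y t - u x t ≤ 0 := by linarith [hu.lt_of_le_of_lt ht hyT htx.le hxy]
      linarith [mul_nonpos_of_nonneg_of_nonpos hP hneg]
  refine ⟨?_, hyx⟩
  by_contra! hyt
  rw [P_of_lt hyx] at hg
  have hFlt : F ((y + x) / 2) < F ((t + x) / 2) :=
    hF.2.1 (midpoint_mem_T hyT hx) (midpoint_mem_T ht hx) (by linarith)
  have hult := hu.lt_of_lt_of_le ht hyT hyt le_rfl
  have h1 : F ((y + x) / 2) * (u y t - u x t) ≤ F ((y + x) / 2) * (u t t - u x t) :=
    mul_le_mul_of_nonneg_left (by linarith) (hF.midpoint_pos hyT hx hyx).le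
  have h2 := mul_lt_mul_of_pos_right hFlt hd
  linarith

/-- Under SLS, candidate `l`'s best responses are increasing in candidate `l`'s
ideal policy. -/
theorem brL_monotone_in_ideal (F : ℝ → ℝ) (u : ℝ → ℝ → ℝ)
    (hF : Fhyp F) (hu : uhyp u) (hSLS : SLS u)
    (tl tl' xr : ℝ) (htl : tl ∈ T) (htl' : tl' ∈ T) (hxr : xr ∈ T)
    (hlt : tl < tl') (hx : xr > tl) :
    ∀ xl ∈ brL F u tl xr, ∀ xl' ∈ brL F u tl' xr, xl ≤ xl' := by
  intro xl hxl xl' hxl'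
  have hI := brL_mem_Ico hF hu htl hxr hx hxl
  have hT : xl ∈ T := hxl.1
  have hT' : xl' ∈ T := hxl'.1
  by_contra! hcon
  have hlt' : xl' < xr := hcon.trans hI.2
  have hp := hF.midpoint_pos hT hxr hI.2
  have hp' := hF.midpoint_pos hT' hxr hlt'
  rcases le_or_gt xr tl' with hle | hgt
  · have hg := brL_gain hxl' hxr
    rw [P_of_lt hlt', sub_self, mul_zero] at hg
    have hneg : u xl' tl' - u xr tl' < 0 := sub_neg.2 (hu.lt_of_lt_of_le htl' hT' hlt' hle)
    linarith [mul_neg_of_pos_of_neg hp' hneg]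
  · have hI' := brL_mem_Ico hF hu htl' hxr hgt hxl'
    have hg := brL_gain hxl hT'
    have hg' := brL_gain hxl' hT
    rw [P_of_lt hlt', P_of_lt hI.2] at hg hg'
    have hd : 0 < u xl' tl - u xr tl :=
      sub_pos.2 (hu.lt_of_le_of_lt htl hxr (hlt.le.trans hI'.1) hlt')
    have hd' : 0 < u xl' tl' - u xr tl' := sub_pos.2 (hu.lt_of_le_of_lt htl' hxr hI'.1 hlt')
    have hs := hSLS tl tl' xl' xl xr htl htl' hT' hT hxr (Or.inl ⟨hlt, hI'.1, hcon, hI.2⟩)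
    -- Both optimality conditions compare a utility ratio with the same probability ratio.
    have h1 : F ((xl' + xr) / 2) / F ((xl + xr) / 2)
        ≤ (u xl tl - u xr tl) / (u xl' tl - u xr tl) := by
      rw [div_le_div_iff₀ hp hd]; linarith
    have h2 : (u xl tl' - u xr tl') / (u xl' tl' - u xr tl')
        ≤ F ((xl' + xr) / 2) / F ((xl + xr) / 2) := by
      rw [div_le_div_iff₀ hd' hp]; linarith
    exact absurd hs (h2.trans h1).not_gt
end

section
/- Let t_l ∈ T and x_r ∈ T with x_r > t_l. If x_l ∈ φ^l_{t_l}(x_r) and x'_l ∈ T with x'_l > x_l, then π(x'_l, x_r) > π(x_l, x_r): the expected policy function is strictly increasing in candidate l's platform above any best response of candidate l. -/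
/-!
Write `r` for the opponent's platform, `t` for the ideal policy and `v x = u x t - u r t`. Then
`U = u r t + P * v` and `pol = r - P * (r - x)`. Moving to `t < r` wins with positive probability
and gives `v t > 0`, so a best response `a` has `P * v a > 0`; as `v ≤ 0` to the right of `r`
by strict concavity, `a < r` and `v a > 0`.

For `a' ≥ r` the expected policy is at least `r`, hence above its value at `a`. For `a < a' < r`,
with winning probabilities `P` at `a` and `P'` at `a'`, the best response inequality says
`P' * v a' ≤ P * v a`, while strict concavity says that `v x / (r - x)` is
strictly increasing in `x`; dividing gives `P' * (r - a') < P * (r - a)`.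
-/

open Set

/-- A best response to a platform strictly to the right of the ideal policy lies strictly to the
left of that platform, wins with positive probability, and beats it in payoff. -/
lemma brL_spec (F : ℝ → ℝ) (u : ℝ → ℝ → ℝ) (hF : Fhyp F) (hu : uhyp u)
    (t r : ℝ) (ht : t ∈ T) (hr : r ∈ T) (h : t < r) (a : ℝ) (ha : a ∈ brL F u t r) :
    a < r ∧ 0 < F ((a + r) / 2) ∧ u r t < u a t := by
  obtain ⟨-, hmono, hF01⟩ := hF
  obtain ⟨-, hconc, hpeak⟩ := hu
  obtain ⟨haT, hbr⟩ := ha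
  have hv : u r t < u t t := hpeak t ht r hr h.ne'
  have h0 : (0 : ℝ) ∈ T := ⟨le_rfl, zero_le_one⟩
  have hm : (t + r) / 2 ∈ T := ⟨by linarith [ht.1, hr.1], by linarith [ht.2, hr.2]⟩
  have hma : (a + r) / 2 ∈ T := ⟨by linarith [haT.1, hr.1], by linarith [haT.2, hr.2]⟩
  -- `F` may vanish at `0`, but the midpoint of `t < r` is positive.
  have hFpos : 0 < F ((t + r) / 2) :=
    (hF01 0 h0).1.trans_lt (hmono h0 hm (by linarith [ht.1]))
  have hUt := hbr t ht
  have hPt : P F t r = F ((t + r) / 2) := by simp [P, h]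
  unfold U at hUt
  rw [hPt] at hUt
  have hgain : 0 < P F a r * (u a t - u r t) := by
    have := mul_pos hFpos (sub_pos.2 hv)
    linarith
  have hP0 : 0 ≤ P F a r := by
    have := hF01 _ hma
    unfold P
    split_ifs <;> linarith
  have hP : 0 < P F a r := lt_of_le_of_ne hP0 fun h => by simp [← h] at hgain
  have hva : u r t < u a t := sub_pos.1 (pos_of_mul_pos_right hgain hP0)
  have har : a < r := by
    by_contra hge
    rcases (not_lt.1 hge).eq_or_lt with rfl | hlt
    · exact lt_irrefl _ hva
    · have := (hconc t ht).slope_anti_adjacent ht haT h hlt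
      have h1 : 0 < (u a t - u r t) / (a - r) := div_pos (by linarith) (by linarith)
      have h2 : (u r t - u t t) / (r - t) < 0 :=
        div_neg_of_neg_of_pos (by linarith) (by linarith)
      linarith
  refine ⟨har, ?_, hva⟩
  simpa [P, har] using hP

/-- The expected policy function is strictly increasing in candidate `l`'s
platform above any best response of candidate `l`. -/
theorem expected_policy_increasing_left (F : ℝ → ℝ) (u : ℝ → ℝ → ℝ)
    (hF : Fhyp F) (hu : uhyp u)
    (tl xr : ℝ) (htl : tl ∈ T) (hxr : xr ∈ T) (h : xr > tl) :
    ∀ xl ∈ brL F u tl xr, ∀ xl' ∈ T, xl' > xl → pol F xl' xr > pol F xl xr := by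
  intro a ha a' ha' hlt
  obtain ⟨har, hFa, hva⟩ := brL_spec F u hF hu tl xr htl hxr h a ha
  obtain ⟨-, hmono, hF01⟩ := hF
  obtain ⟨haT, hbr⟩ := ha
  have hm : (a + xr) / 2 ∈ T := ⟨by linarith [haT.1, hxr.1], by linarith [haT.2, hxr.2]⟩
  have hm' : (a' + xr) / 2 ∈ T := ⟨by linarith [ha'.1, hxr.1], by linarith [ha'.2, hxr.2]⟩
  have hPa : P F a xr = F ((a + xr) / 2) := by simp [P, har]
  have hpos : 0 < F ((a + xr) / 2) * (xr - a) := mul_pos hFa (sub_pos.2 har)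
  unfold pol
  rw [hPa]
  rcases lt_or_ge a' xr with hlt' | hge
  · have hPa' : P F a' xr = F ((a' + xr) / 2) := by simp [P, hlt']
    have hFF : F ((a + xr) / 2) < F ((a' + xr) / 2) := hmono hm hm' (by linarith)
    have hU := hbr a' ha'
    unfold U at hU
    rw [hPa, hPa'] at hU
    rw [hPa']
    have hpos2 := hFa.trans hFF
    -- The chord from `a'` to `xr` is strictly steeper than the chord from `a` to `xr`.
    have hs : (u a tl - u xr tl) * (xr - a') < (u a' tl - u xr tl) * (xr - a) := by
      have := (hu.2.1 tl htl).slope_anti_adjacent haT hxr hlt hlt'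
      rw [div_lt_div_iff₀ (by linarith) (by linarith)] at this
      linarith
    have h1 := mul_lt_mul_of_pos_left hs hpos2
    have h2 : F ((a' + xr) / 2) * (u a' tl - u xr tl) * (xr - a)
        ≤ F ((a + xr) / 2) * (u a tl - u xr tl) * (xr - a) :=
      mul_le_mul_of_nonneg_right (by linarith) (by linarith)
    have h3 : F ((a' + xr) / 2) * (xr - a') < F ((a + xr) / 2) * (xr - a) :=
      lt_of_mul_lt_mul_right (a := u a tl - u xr tl) (by linarith) (by linarith)
    linarith
  · have hP0 : 0 ≤ P F a' xr := by
      have := hF01 _ hm'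
      unfold P
      split_ifs <;> linarith
    have := mul_nonneg hP0 (sub_nonneg.2 hge)
    linarith
end

section
/- Let t_r ∈ T and x_l ∈ T with x_l < t_r. If x_r ∈ φ^r_{t_r}(x_l) and x'_r ∈ T with x'_r < x_r, then π(x_l, x'_r) < π(x_l, x_r): the expected policy function is strictly increasing in candidate r's platform below any best response of candidate r. -/
/-!
Write `xr` for a best response of `r` to `xl < tr`. Proposing `tr` itself gives `r` strictly more
than `u xl tr`, because `F < 1` below `1`; a platform `≤ xl` gives at most `u xl tr`, because
`u · tr` increases up to `tr`. Hence `xl < xr` and `u xl tr < u xr tr`.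

For platforms `x > xl` with midpoint `m`, the expected policy is `xl + (1 - F m) * (x - xl)` and
the payoff is `u xl tr + (1 - F m) * (u x tr - u xl tr)`. For `xl < x' < xr`, strict concavity makes
the secant slope of `u · tr` from `xl` to `x'` exceed the one from `xl` to `xr`; if the expected
policy at `x'` were at least the one at `xr`, the payoff at `x'` would therefore exceed that at
`xr`. For `x' ≤ xl` the expected policy is at most `xl`, hence below the one at `xr`.
-/

open Set

lemma Fhyp.lt_one {F : ℝ → ℝ} (hF : Fhyp F) {x : ℝ} (h0 : 0 ≤ x) (h1 : x < 1) : F x < 1 :=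
  (hF.2.1 ⟨h0, h1.le⟩ ⟨zero_le_one, le_rfl⟩ h1).trans_le (hF.2.2 1 ⟨zero_le_one, le_rfl⟩).2

lemma uhyp.lt_of_lt_of_lt_peak {u : ℝ → ℝ → ℝ} (hu : uhyp u) {x y t : ℝ} (hx : x ∈ T)
    (ht : t ∈ T) (hxy : x < y) (hyt : y < t) : u x t < u y t := by
  have hy : y ∈ T := ⟨hx.1.trans hxy.le, hyt.le.trans ht.2⟩
  have hs := (hu.2.1 t ht).slope_anti_adjacent hx ht hxy hyt
  have hpos : 0 < (u t t - u y t) / (t - y) :=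
    div_pos (sub_pos.2 (hu.2.2 t ht y hy hyt.ne)) (sub_pos.2 hyt)
  have := (div_pos_iff_of_pos_right (sub_pos.2 hxy)).1 (hpos.trans hs)
  linarith

/-- Comparison of the secants of a strictly concave function from a common left endpoint,
cleared of denominators. -/
lemma StrictConcaveOn.secant_mul_lt {f : ℝ → ℝ} {s : Set ℝ} (hf : StrictConcaveOn ℝ s f)
    {x y z : ℝ} (hx : x ∈ s) (hz : z ∈ s) (hxy : x < y) (hyz : y < z) :
    (f z - f x) * (y - x) < (f y - f x) * (z - x) := by
  have hs := hf.slope_anti_adjacent hx hz hxy hyz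
  rw [div_lt_div_iff₀ (sub_pos.2 hyz) (sub_pos.2 hxy)] at hs
  linarith

/-- A best response of `r` to a platform `xl < tr` lies above `xl` and is strictly better than
`xl` for `r`. -/
lemma brR_gt {F : ℝ → ℝ} {u : ℝ → ℝ → ℝ} (hF : Fhyp F) (hu : uhyp u) {tr xl xr : ℝ}
    (htr : tr ∈ T) (hxl : xl ∈ T) (h : xl < tr) (hxr : xr ∈ brR F u tr xl) :
    xl < xr ∧ u xl tr < u xr tr := by
  obtain ⟨hxrT, hbest⟩ := hxr
  have hdev : u xl tr < U F u tr xl xr := by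
    refine lt_of_lt_of_le ?_ (hbest tr htr)
    have hF1 : F ((xl + tr) / 2) < 1 :=
      hF.lt_one (by linarith [hxl.1, htr.1]) (by linarith [htr.2])
    have hu1 := hu.2.2 tr htr xl hxl h.ne
    simp only [U, P, if_pos h]
    nlinarith [mul_pos (sub_pos.2 hF1) (sub_pos.2 hu1)]
  rcases lt_trichotomy xl xr with hlt | heq | hgt
  · refine ⟨hlt, ?_⟩
    have hF1 : F ((xl + xr) / 2) < 1 :=
      hF.lt_one (by linarith [hxl.1, hxrT.1]) (by linarith [hxrT.2])
    simp only [U, P, if_pos hlt] at hdev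
    have : 0 < (1 - F ((xl + xr) / 2)) * (u xr tr - u xl tr) := by linarith
    exact sub_pos.1 ((mul_pos_iff_of_pos_left (sub_pos.2 hF1)).1 this)
  · subst heq
    simp only [U] at hdev
    linarith
  · have hF0 : 0 ≤ F ((xl + xr) / 2) :=
      (hF.2.2 _ ⟨by linarith [hxl.1, hxrT.1], by linarith [hxl.2, hxrT.2]⟩).1
    have hu1 := hu.lt_of_lt_of_lt_peak hxrT htr hgt h
    simp only [U, P, if_neg hgt.not_gt, if_neg hgt.ne'] at hdev
    nlinarith [mul_nonneg hF0 (sub_pos.2 hu1).le]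

/-- The expected policy function is strictly increasing in candidate `r`'s
platform below any best response of candidate `r`. -/
theorem expected_policy_increasing_right (F : ℝ → ℝ) (u : ℝ → ℝ → ℝ)
    (hF : Fhyp F) (hu : uhyp u)
    (tr xl : ℝ) (htr : tr ∈ T) (hxl : xl ∈ T) (h : xl < tr) :
    ∀ xr ∈ brR F u tr xl, ∀ xr' ∈ T, xr' < xr → pol F xl xr' < pol F xl xr := by
  intro xr hxr x' hx' hlt
  obtain ⟨hlr, hur⟩ := brR_gt hF hu htr hxl h hxr
  obtain ⟨hxrT, hbest⟩ := hxr
  have hF1 : F ((xl + xr) / 2) < 1 :=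
    hF.lt_one (by linarith [hxl.1, hxrT.1]) (by linarith [hxrT.2])
  have hpol : xl < pol F xl xr := by
    simp only [pol, P, if_pos hlr]
    nlinarith [mul_pos (sub_pos.2 hF1) (sub_pos.2 hlr)]
  rcases lt_trichotomy xl x' with hlx | heq | hgt
  · have hF1' : F ((xl + x') / 2) < 1 :=
      hF.lt_one (by linarith [hxl.1, hx'.1]) (by linarith [hxrT.2])
    have hb := hbest x' hx'
    simp only [U, P, if_pos hlr, if_pos hlx] at hb
    simp only [pol, P, if_pos hlr, if_pos hlx]
    have hs := (hu.2.1 tr htr).secant_mul_lt hxl hxrT hlx hlt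
    set p := 1 - F ((xl + xr) / 2)
    set q := 1 - F ((xl + x') / 2) with hq
    have hq0 : 0 < q := sub_pos.2 hF1'
    have hb' : q * (u x' tr - u xl tr) ≤ p * (u xr tr - u xl tr) := by
      linarith
    have key : q * (x' - xl) < p * (xr - xl) := by
      -- After scaling by the positive gain `u xr tr - u xl tr`, the secant inequality
      -- and the best-response inequality chain together.
      refine lt_of_mul_lt_mul_right ?_ (sub_pos.2 hur).le
      have h1 := mul_lt_mul_of_pos_left hs hq0
      have h2 := mul_le_mul_of_nonneg_right hb' (sub_pos.2 hlr).le
      linarith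
    linarith
  · subst heq
    refine lt_of_eq_of_lt ?_ hpol
    simp only [pol]
    ring
  · refine lt_of_le_of_lt ?_ hpol
    have hF0 : 0 ≤ F ((xl + x') / 2) :=
      (hF.2.2 _ ⟨by linarith [hxl.1, hx'.1], by linarith [hxl.2, hx'.2]⟩).1
    simp only [pol, P, if_neg hgt.not_gt, if_neg hgt.ne']
    nlinarith [mul_nonneg hF0 (sub_pos.2 hgt).le]
end
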